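/- Radó's theorem in one variable: let U be an open subset of ℂ and let g : ℂ → ℂ be continuous on U and complex differentiable (holomorphic) at every point of U \ g⁻¹({0}). Then g is holomorphic on all of U. -/

import Mathlib

/-!
If `h` is holomorphic on `V = {f ≠ 0}`, then so is `h ^ n * f`, which vanishes at the zeros of `f`.
Bounding it on the rest of the boundary, taking `n`-th roots and letting `n → ∞` gives a maximum
principle for `h` on `V` that ignores the zeros of `f`.
Comparing `re h` on a circle with real parts of polynomials then shows that `h` has the mean value
property at the centre `c`; applied to `(z - c) * h` this says `∮ h = 0`. For `w ∈ V` the choice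
`h = dslope f w` is Cauchy's formula for `f` at `w`, so `f` agrees on `V` with a function analytic
in the whole disc. Finally, `V` is dense near `z₀` unless `f` vanishes near `z₀`: if `f` vanishes near
`a`, the maximum principle for `(z - a)⁻¹` keeps `V` out of every disc centred at `a`.
-/

open Complex Filter Metric Real Set Topology
open scoped ComplexConjugate

section MaximumPrinciple

lemma le_of_forall_pow_mul_le_pow_mul {a b c C : ℝ} (hb : 0 ≤ b) (hc : 0 < c)
    (h : ∀ n : ℕ, a ^ n * c ≤ b ^ n * C) : a ≤ b := by
  by_contra! hba
  have ha : 0 < a := hb.trans_lt hba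
  have hlim : Tendsto (fun n : ℕ ↦ (b / a) ^ n * C) atTop (𝓝 (0 * C)) :=
    (tendsto_pow_atTop_nhds_zero_of_lt_one (by positivity) ((div_lt_one ha).2 hba)).mul_const C
  have hle (n : ℕ) : c ≤ (b / a) ^ n * C := by
    rw [div_pow, div_mul_eq_mul_div, le_div_iff₀ (by positivity), mul_comm]
    exact h n
  linarith [ge_of_tendsto' hlim hle]

lemma isOpen_diff_preimage_singleton {X Y : Type*} [TopologicalSpace X]
    [TopologicalSpace Y] [T1Space Y] {f : X → Y} {U : Set X} (hU : IsOpen U)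
    (hf : ContinuousOn f U) (y : Y) : IsOpen (U \ f ⁻¹' {y}) :=
  hf.isOpen_inter_preimage hU isOpen_compl_singleton

lemma eq_or_mem_frontier_of_mem_frontier_diff_preimage_singleton {X Y : Type*}
    [TopologicalSpace X] [TopologicalSpace Y] [T1Space Y] {f : X → Y} {U : Set X} {x : X} {y : Y}
    (hU : IsOpen U) (hf : ContinuousOn f U) (hx : x ∈ frontier (U \ f ⁻¹' {y})) :
    f x = y ∨ x ∈ frontier U := by
  rw [(isOpen_diff_preimage_singleton hU hf y).frontier_eq] at hx
  rw [hU.frontier_eq, or_iff_not_imp_left]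
  exact fun hxy ↦ ⟨closure_mono sdiff_subset hx.1, fun hxU ↦ hx.2 ⟨hxU, hxy⟩⟩

variable {E : Type*} [NormedAddCommGroup E] [NormedSpace ℂ E] [Nontrivial E] [ProperSpace E]
  {f h : E → ℂ} {U : Set E}

theorem norm_le_of_forall_mem_frontier_of_diff_zeros (hU : IsOpen U)
    (hUb : Bornology.IsBounded U) (hf : ContinuousOn f (closure U))
    (hfd : DifferentiableOn ℂ f (U \ f ⁻¹' {0})) (hh : DiffContOnCl ℂ h (U \ f ⁻¹' {0}))
    {M : ℝ} (hM₀ : 0 ≤ M) (hM : ∀ z ∈ frontier U, ‖h z‖ ≤ M) {z : E}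
    (hz : z ∈ closure (U \ f ⁻¹' {0})) : ‖h z‖ ≤ M := by
  obtain ⟨B, hB⟩ := hUb.isCompact_closure.exists_bound_of_continuousOn hf
  have hfV : DiffContOnCl ℂ f (U \ f ⁻¹' {0}) := ⟨hfd, hf.mono (closure_mono sdiff_subset)⟩
  refine le_on_closure (fun w hw ↦ ?_) hh.continuousOn.norm continuousOn_const hz
  have hB₀ : 0 ≤ B := (norm_nonneg _).trans (hB w (subset_closure hw.1))
  refine le_of_forall_pow_mul_le_pow_mul hM₀ (norm_pos_iff.2 hw.2) (C := B) fun n ↦ ?_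
  have hpow : DiffContOnCl ℂ (fun x ↦ h x ^ n * f x) (U \ f ⁻¹' {0}) :=
    ⟨(hh.differentiableOn.pow n).mul hfV.differentiableOn,
      (hh.continuousOn.pow n).mul hfV.continuousOn⟩
  rw [← norm_pow, ← norm_mul]
  refine norm_le_of_forall_mem_frontier_norm_le (hUb.subset sdiff_subset) hpow
    (fun x hx ↦ ?_) (subset_closure hw)
  obtain hfx | hxU := eq_or_mem_frontier_of_mem_frontier_diff_preimage_singleton hU
    (hf.mono subset_closure) hx
  · rw [hfx, mul_zero, norm_zero]
    positivity
  · rw [norm_mul, norm_pow]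
    gcongr
    · exact hM x hxU
    · exact hB x (frontier_subset_closure hxU)

theorem re_le_of_forall_mem_frontier_of_diff_zeros (hU : IsOpen U)
    (hUb : Bornology.IsBounded U) (hf : ContinuousOn f (closure U))
    (hfd : DifferentiableOn ℂ f (U \ f ⁻¹' {0})) (hh : DiffContOnCl ℂ h (U \ f ⁻¹' {0}))
    {M : ℝ} (hM : ∀ z ∈ frontier U, (h z).re ≤ M) {z : E}
    (hz : z ∈ closure (U \ f ⁻¹' {0})) : (h z).re ≤ M := by
  rw [← Real.exp_le_exp, ← norm_exp]
  refine norm_le_of_forall_mem_frontier_of_diff_zeros hU hUb hf hfd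
    (Complex.differentiable_exp.comp_diffContOnCl hh) (Real.exp_pos M).le (fun w hw ↦ ?_) hz
  rw [Function.comp_apply, norm_exp]
  exact Real.exp_le_exp.2 (hM w hw)

theorem abs_re_le_of_forall_mem_frontier_of_diff_zeros (hU : IsOpen U)
    (hUb : Bornology.IsBounded U) (hf : ContinuousOn f (closure U))
    (hfd : DifferentiableOn ℂ f (U \ f ⁻¹' {0})) (hh : DiffContOnCl ℂ h (U \ f ⁻¹' {0}))
    {M : ℝ} (hM : ∀ z ∈ frontier U, |(h z).re| ≤ M) {z : E}
    (hz : z ∈ closure (U \ f ⁻¹' {0})) : |(h z).re| ≤ M :=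
  abs_le'.2 ⟨re_le_of_forall_mem_frontier_of_diff_zeros hU hUb hf hfd hh
      (fun w hw ↦ (abs_le'.1 (hM w hw)).1) hz,
    re_le_of_forall_mem_frontier_of_diff_zeros hU hUb hf hfd hh.neg
      (fun w hw ↦ (abs_le'.1 (hM w hw)).2) hz⟩

end MaximumPrinciple

section ZeroSet

theorem eqOn_zero_ball_of_eventuallyEq_zero {f : ℂ → ℂ} {a : ℂ} {R : ℝ}
    (hf : ContinuousOn f (closedBall a R)) (hfd : DifferentiableOn ℂ f (ball a R \ f ⁻¹' {0}))
    (ha : f =ᶠ[𝓝 a] 0) : EqOn f 0 (ball a R) := by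
  intro z hz
  by_contra hfz
  have hR : 0 < R := pos_of_mem_ball hz
  have ha' : a ∉ closure (ball a R \ f ⁻¹' {0}) := fun h ↦
    ((mem_closure_iff_frequently.1 h).and_eventually ha).exists.elim fun _ hw ↦ hw.1.2 hw.2
  have hinv : DiffContOnCl ℂ (fun w ↦ w - a)⁻¹ (ball a R \ f ⁻¹' {0}) :=
    (Differentiable.diffContOnCl (by fun_prop)).inv
      fun w hw hwa ↦ ha' (sub_eq_zero.1 hwa ▸ hw)
  have hle : ‖(z - a)⁻¹‖ ≤ R⁻¹ := by
    refine norm_le_of_forall_mem_frontier_of_diff_zeros isOpen_ball isBounded_ball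
      (hf.mono closure_ball_subset_closedBall) hfd hinv (by positivity) (fun w hw ↦ ?_)
      (subset_closure ⟨hz, hfz⟩)
    rw [Pi.inv_apply, norm_inv, mem_sphere_iff_norm.1 (frontier_ball_subset_sphere hw)]
  have hza : 0 < ‖z - a‖ := norm_sub_pos_iff.2 fun h ↦ hfz (h ▸ ha.self_of_nhds)
  rw [norm_inv, inv_le_inv₀ hza hR] at hle
  exact (mem_ball_iff_norm.1 hz).not_ge hle

theorem ball_subset_closure_diff_zeros {f : ℂ → ℂ} {c : ℂ} {R : ℝ}
    (hf : ContinuousOn f (closedBall c (2 * R)))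
    (hfd : DifferentiableOn ℂ f (ball c (2 * R) \ f ⁻¹' {0})) (hc : ¬ f =ᶠ[𝓝 c] 0) :
    ball c R ⊆ closure (ball c R \ f ⁻¹' {0}) := by
  intro a ha
  by_contra ha'
  have hzero : f =ᶠ[𝓝 a] 0 := by
    rw [mem_closure_iff_frequently, not_frequently] at ha'
    filter_upwards [ha', isOpen_ball.mem_nhds ha] with z hz hzR
    exact not_not.1 fun hfz ↦ hz ⟨hzR, hfz⟩
  have hR : R + dist a c ≤ 2 * R := by linarith [mem_ball.1 ha]
  have heq : EqOn f 0 (ball a R) :=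
    eqOn_zero_ball_of_eventuallyEq_zero (hf.mono (closedBall_subset_closedBall' hR))
      (hfd.mono (sdiff_subset_sdiff_left (ball_subset_ball' hR))) hzero
  exact hc (heq.eventuallyEq_of_mem (isOpen_ball.mem_nhds (mem_ball_comm.1 ha)))

end ZeroSet

section PolynomialApproximation

open Polynomial

lemma exists_polynomial_re_eval_toCircle_eq {T : ℝ} {ψ : C(AddCircle T, ℂ)}
    (hψ : ψ ∈ Submodule.span ℂ (range (fourier (T := T)))) :
    ∃ p : ℂ[X], ∀ x, (p.eval (AddCircle.toCircle x : ℂ)).re = (ψ x).re := by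
  -- The factor `a` makes the claim stable under complex scalar multiplication.
  suffices ∀ a : ℂ, ∃ p : ℂ[X], ∀ x, (p.eval (AddCircle.toCircle x : ℂ)).re = (a * ψ x).re by
    simpa only [one_mul] using this 1
  induction hψ using Submodule.span_induction with
  | mem ψ hψ =>
    intro a
    obtain ⟨n, rfl⟩ := hψ
    obtain ⟨m, rfl | rfl⟩ := n.eq_nat_or_neg
    · exact ⟨C a * X ^ m, fun x ↦ by simp [fourier_apply, AddCircle.toCircle_nsmul]⟩
    · refine ⟨C (conj a) * X ^ m, fun x ↦ ?_⟩
      rw [← conj_re, fourier_neg]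
      simp [fourier_apply, AddCircle.toCircle_nsmul]
  | zero => exact fun a ↦ ⟨0, by simp⟩
  | add ψ₁ ψ₂ _ _ h₁ h₂ =>
    intro a
    obtain ⟨p₁, hp₁⟩ := h₁ a
    obtain ⟨p₂, hp₂⟩ := h₂ a
    exact ⟨p₁ + p₂, fun x ↦ by
      rw [eval_add, add_re, hp₁, hp₂, ContinuousMap.add_apply, mul_add, add_re]⟩
  | smul b ψ _ h =>
    intro a
    simpa only [ContinuousMap.smul_apply, smul_eq_mul, mul_assoc] using h (a * b)

lemma exists_polynomial_abs_sub_re_eval_le_of_circle (u : C(Circle, ℝ)) {ε : ℝ} (hε : 0 < ε) :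
    ∃ p : ℂ[X], ∀ z : Circle, |u z - (p.eval (z : ℂ)).re| ≤ ε := by
  have : Fact (0 < 2 * π) := ⟨two_pi_pos⟩
  let e : AddCircle (2 * π) ≃ₜ Circle := AddCircle.homeomorphCircle two_pi_pos.ne'
  let φ : C(AddCircle (2 * π), ℂ) := ⟨fun x ↦ u (e x), by fun_prop⟩
  have hφ : φ ∈ (Submodule.span ℂ (range (fourier (T := 2 * π)))).topologicalClosure := by
    rw [span_fourier_closure_eq_top]
    trivial
  obtain ⟨ψ, hψ, hφψ⟩ := mem_closure_iff.1 hφ ε hε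
  obtain ⟨p, hp⟩ := exists_polynomial_re_eval_toCircle_eq hψ
  refine ⟨p, e.surjective.forall.2 fun x ↦ ?_⟩
  calc |u (e x) - (p.eval (e x : ℂ)).re| = |(φ x - ψ x).re| := by
        rw [AddCircle.homeomorphCircle_apply, hp, ← AddCircle.homeomorphCircle_apply, sub_re]
        rfl
    _ ≤ dist (φ x) (ψ x) := (abs_re_le_norm _).trans_eq (dist_eq_norm _ _).symm
    _ ≤ ε := (ContinuousMap.dist_apply_le_dist x).trans hφψ.le

theorem exists_polynomial_abs_sub_re_eval_le {u : ℂ → ℝ} {c : ℂ} {R : ℝ} (hR : 0 < R)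
    (hu : ContinuousOn u (sphere c R)) {ε : ℝ} (hε : 0 < ε) :
    ∃ p : ℂ[X], ∀ z ∈ sphere c R, |u z - (p.eval z).re| ≤ ε := by
  have hmem (ζ : Circle) : c + R * ζ ∈ sphere c R := by
    simp [abs_of_pos hR, Circle.norm_coe]
  obtain ⟨p, hp⟩ := exists_polynomial_abs_sub_re_eval_le_of_circle
    ⟨fun ζ ↦ u (c + R * ζ), hu.comp_continuous (by fun_prop) hmem⟩ hε
  refine ⟨p.comp (C (R : ℂ)⁻¹ * (X - C c)), fun z hz ↦ ?_⟩
  have hz' : (R : ℂ)⁻¹ * (z - c) ∈ Submonoid.unitSphere ℂ := by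
    simp [Submonoid.unitSphere, abs_of_pos hR, mem_sphere_iff_norm.1 hz, hR.ne']
  have hRz : c + R * ((R : ℂ)⁻¹ * (z - c)) = z := by
    rw [mul_inv_cancel_left₀ (ofReal_ne_zero.2 hR.ne'), add_sub_cancel]
  simpa [hRz] using hp ⟨_, hz'⟩

end PolynomialApproximation

section CauchyFormula

variable {f h : ℂ → ℂ} {c : ℂ} {R : ℝ}

lemma abs_circleAverage_le_of_forall_mem_sphere {u : ℂ → ℝ} {ε : ℝ}
    (hu : CircleIntegrable u c R) (hε : ∀ z ∈ sphere c |R|, |u z| ≤ ε) :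
    |circleAverage u c R| ≤ ε :=
  abs_circleAverage_le_circleAverage_abs.trans (circleAverage_mono_on_of_le_circle hu.abs hε)

theorem re_circleAverage_eq_of_diff_zeros (hf : ContinuousOn f (closedBall c R))
    (hfd : DifferentiableOn ℂ f (ball c R \ f ⁻¹' {0})) (hh : ContinuousOn h (closedBall c R))
    (hhd : DifferentiableOn ℂ h (ball c R \ f ⁻¹' {0}))
    (hc : c ∈ closure (ball c R \ f ⁻¹' {0})) : (circleAverage h c R).re = (h c).re := by
  have hR : 0 < R := nonempty_ball.1 ((closure_nonempty_iff.1 ⟨c, hc⟩).mono sdiff_subset)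
  have hV : closure (ball c R \ f ⁻¹' {0}) ⊆ closedBall c R :=
    (closure_mono sdiff_subset).trans closure_ball_subset_closedBall
  have hhs : ContinuousOn h (sphere c R) := hh.mono sphere_subset_closedBall
  refine eq_of_forall_dist_le fun ε hε ↦ ?_
  obtain ⟨p, hp⟩ := exists_polynomial_abs_sub_re_eval_le hR
    (continuous_re.comp_continuousOn hhs) (half_pos hε)
  have hkV : DiffContOnCl ℂ (h - p.eval) (ball c R \ f ⁻¹' {0}) :=
    ⟨hhd.sub p.differentiable.differentiableOn, (hh.mono hV).sub p.continuous.continuousOn⟩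
  have hkc : |((h - p.eval) c).re| ≤ ε / 2 :=
    abs_re_le_of_forall_mem_frontier_of_diff_zeros isOpen_ball isBounded_ball
      (hf.mono closure_ball_subset_closedBall) hfd hkV
      (fun z hz ↦ hp z (frontier_ball_subset_sphere hz)) hc
  have hhi : CircleIntegrable h c R := hhs.circleIntegrable hR.le
  have hpi : CircleIntegrable p.eval c R := p.continuous.continuousOn.circleIntegrable hR.le
  have hkavg : |(circleAverage (h - p.eval) c R).re| ≤ ε / 2 := by
    rw [← reCLM_apply, ← reCLM.circleAverage_comp_comm (hhi.sub hpi)]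
    refine abs_circleAverage_le_of_forall_mem_sphere
      (ContinuousOn.circleIntegrable hR.le ?_) (by rwa [abs_of_pos hR])
    exact continuous_re.comp_continuousOn (hhs.sub p.continuous.continuousOn)
  have hpavg : circleAverage p.eval c R = p.eval c := p.differentiable.diffContOnCl.circleAverage
  rw [circleAverage_sub hhi hpi, hpavg, sub_re] at hkavg
  rw [Pi.sub_apply, sub_re] at hkc
  rw [Real.dist_eq]
  calc |(circleAverage h c R).re - (h c).re|
      ≤ |(circleAverage h c R).re - (p.eval c).re| + |(p.eval c).re - (h c).re| :=
        abs_sub_le _ _ _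
    _ ≤ ε / 2 + ε / 2 := add_le_add hkavg ((abs_sub_comm _ _).trans_le hkc)
    _ = ε := add_halves ε

theorem circleAverage_eq_of_diff_zeros (hf : ContinuousOn f (closedBall c R))
    (hfd : DifferentiableOn ℂ f (ball c R \ f ⁻¹' {0})) (hh : ContinuousOn h (closedBall c R))
    (hhd : DifferentiableOn ℂ h (ball c R \ f ⁻¹' {0}))
    (hc : c ∈ closure (ball c R \ f ⁻¹' {0})) : circleAverage h c R = h c := by
  refine Complex.ext (re_circleAverage_eq_of_diff_zeros hf hfd hh hhd hc) ?_
  have hI := re_circleAverage_eq_of_diff_zeros hf hfd (hh.const_smul I) (hhd.const_smul I) hc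
  rw [circleAverage_smul] at hI
  simpa only [Pi.smul_apply, smul_eq_mul, I_mul_re, neg_inj] using hI

theorem circleIntegral_eq_zero_of_diff_zeros (hf : ContinuousOn f (closedBall c R))
    (hfd : DifferentiableOn ℂ f (ball c R \ f ⁻¹' {0})) (hh : ContinuousOn h (closedBall c R))
    (hhd : DifferentiableOn ℂ h (ball c R \ f ⁻¹' {0}))
    (hc : c ∈ closure (ball c R \ f ⁻¹' {0})) : ∮ z in C(c, R), h z = 0 := by
  have hR : 0 < R := nonempty_ball.1 ((closure_nonempty_iff.1 ⟨c, hc⟩).mono sdiff_subset)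
  have hmean : circleAverage (fun z ↦ (z - c) • h z) c R = (c - c) • h c :=
    circleAverage_eq_of_diff_zeros hf hfd (by fun_prop) (by fun_prop) hc
  rw [circleAverage_eq_circleIntegral hR.ne', circleIntegral.integral_sub_inv_smul_sub_smul,
    sub_self, zero_smul] at hmean
  exact (smul_eq_zero.1 hmean).resolve_left (inv_ne_zero two_pi_I_ne_zero)

theorem two_pi_I_inv_smul_circleIntegral_sub_inv_smul_of_diff_zeros
    (hf : ContinuousOn f (closedBall c R)) (hfd : DifferentiableOn ℂ f (ball c R \ f ⁻¹' {0}))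
    (hc : c ∈ closure (ball c R \ f ⁻¹' {0})) {w : ℂ} (hw : w ∈ ball c R \ f ⁻¹' {0}) :
    (2 * π * I)⁻¹ • ∮ z in C(c, R), (z - w)⁻¹ • f z = f w := by
  have hR : 0 < R := pos_of_mem_ball hw.1
  have hV : ball c R \ f ⁻¹' {0} ∈ 𝓝 w :=
    (isOpen_diff_preimage_singleton isOpen_ball (hf.mono ball_subset_closedBall) 0).mem_nhds hw
  have hslope : ∮ z in C(c, R), dslope f w z = 0 :=
    circleIntegral_eq_zero_of_diff_zeros hf hfd
      ((continuousOn_dslope (closedBall_mem_nhds_of_mem hw.1)).2 ⟨hf, hfd.differentiableAt hV⟩)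
      ((differentiableOn_dslope hV).2 hfd) hc
  have hinv : ContinuousOn (fun z ↦ (z - w)⁻¹) (sphere c R) := by
    refine ContinuousOn.inv₀ (by fun_prop) fun z hz hzw ↦ ?_
    exact (mem_ball.1 hw.1).ne (sub_eq_zero.1 hzw ▸ hz)
  have hfi : CircleIntegrable (fun z ↦ (z - w)⁻¹ • f z) c R :=
    (hinv.smul (hf.mono sphere_subset_closedBall)).circleIntegrable hR.le
  have hci : CircleIntegrable (fun z ↦ (z - w)⁻¹ • f w) c R :=
    (hinv.smul continuousOn_const).circleIntegrable hR.le
  rw [← circleIntegral.integral_sub_inv_smul_sub_smul _ _ w] at hslope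
  simp only [sub_smul_dslope, smul_sub] at hslope
  rw [circleIntegral.integral_sub hfi hci, sub_eq_zero, circleIntegral.integral_smul_const,
    circleIntegral.integral_sub_inv_of_mem_ball hw.1] at hslope
  rw [hslope, inv_smul_smul₀ two_pi_I_ne_zero]

theorem differentiableOn_ball_of_diff_zeros (hf : ContinuousOn f (closedBall c R))
    (hfd : DifferentiableOn ℂ f (ball c R \ f ⁻¹' {0}))
    (hdense : ball c R ⊆ closure (ball c R \ f ⁻¹' {0})) : DifferentiableOn ℂ f (ball c R) := by
  obtain hR | hR := le_or_gt R 0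
  · rw [ball_eq_empty.2 hR]
    exact differentiableOn_empty
  lift R to NNReal using hR.le
  let F : ℂ → ℂ := fun w ↦ (2 * π * I)⁻¹ • ∮ z in C(c, R), (z - w)⁻¹ • f z
  have hF : DifferentiableOn ℂ F (ball c R) := by
    have hfi := (hf.mono sphere_subset_closedBall).circleIntegrable hR.le
    simpa only [eball_coe] using
      (hasFPowerSeriesOn_cauchy_integral hfi (NNReal.coe_pos.1 hR)).differentiableOn
  have hFf : EqOn F f (ball c R) :=
    EqOn.of_subset_closure (fun w hw ↦
      two_pi_I_inv_smul_circleIntegral_sub_inv_smul_of_diff_zeros hf hfd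
        (hdense (mem_ball_self hR)) hw)
      hF.continuousOn (hf.mono ball_subset_closedBall) sdiff_subset hdense
  exact hF.congr hFf.symm

end CauchyFormula

/-- Radó's theorem in one variable: if `g` is continuous on an open set `U ⊆ ℂ`
and holomorphic at every point of `U` outside the zero set of `g`, then `g` is
holomorphic on all of `U`. -/
theorem rado_one_variable (U : Set ℂ) (hU : IsOpen U) (g : ℂ → ℂ)
    (hcont : ContinuousOn g U)
    (hdiff : ∀ z ∈ U \ g ⁻¹' {0}, DifferentiableAt ℂ g z) :
    ∀ z ∈ U, DifferentiableAt ℂ g z := by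
  intro z₀ hz₀
  by_cases hzero : g =ᶠ[𝓝 z₀] 0
  · exact (differentiableAt_const 0).congr_of_eventuallyEq hzero
  obtain ⟨r, hr, hrU⟩ := nhds_basis_closedBall.mem_iff.1 (hU.mem_nhds hz₀)
  obtain ⟨R, rfl⟩ : ∃ R, r = 2 * R := ⟨r / 2, by ring⟩
  have hR : 0 < R := pos_of_mul_pos_right hr zero_le_two
  have hgd : DifferentiableOn ℂ g (ball z₀ (2 * R) \ g ⁻¹' {0}) := fun z hz ↦
    (hdiff z ⟨hrU (ball_subset_closedBall hz.1), hz.2⟩).differentiableWithinAt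
  have hdense : ball z₀ R ⊆ closure (ball z₀ R \ g ⁻¹' {0}) :=
    ball_subset_closure_diff_zeros (hcont.mono hrU) hgd hzero
  have hR' : R ≤ 2 * R := by linarith
  have hball : DifferentiableOn ℂ g (ball z₀ R) :=
    differentiableOn_ball_of_diff_zeros
      (hcont.mono ((closedBall_subset_closedBall hR').trans hrU))
      (hgd.mono (sdiff_subset_sdiff_left (ball_subset_ball hR'))) hdense
  exact hball.differentiableAt (ball_mem_nhds z₀ hR)
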